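/- Let d ≥ 1, s ∈ [1,∞), R > 0, B ⊂ ℝ^d compact, and let u : ℝ^d → ℂ be smooth, supported in B, with ‖∂_x^α u‖_{L^∞} ≤ C₀ · R^{|α|} · (|α|!)^s for all multi-indices α ∈ ℕ^d. Then for every even natural number m, ‖ |ξ|^m û(ξ) ‖_{L²_ξ} ≤ |B|^{1/2} · C₀ · C(d,m) · R^m · (m!)^s, where C(d,m) is a combinatorial constant depending only on d and m, and û denotes the Fourier transform of u. -/

import Mathlib

open MeasureTheory Real
open scoped FourierTransform ENNReal

noncomputable section

/-- `ℝ^d` as a Euclidean space. -/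
abbrev E (d : ℕ) := EuclideanSpace ℝ (Fin d)

/-- The Japanese bracket `⟨ξ⟩ = (1 + |ξ|²)^{1/2}`. -/
def jap {d : ℕ} (ξ : E d) : ℝ := Real.sqrt (1 + ‖ξ‖ ^ 2)

/-- Partial derivative in the `i`-th coordinate direction. -/
def pder {d : ℕ} {F : Type*} [NormedAddCommGroup F] [NormedSpace ℝ F]
    (i : Fin d) (f : E d → F) : E d → F :=
  fun x => fderiv ℝ f x (EuclideanSpace.single i 1)

/-- Multi-index partial derivative `∂^α`. -/
def mpder {d : ℕ} {F : Type*} [NormedAddCommGroup F] [NormedSpace ℝ F]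
    (α : Fin d → ℕ) (f : E d → F) : E d → F :=
  (List.finRange d).foldr (fun i g => (pder i)^[α i] g) f

open LineDeriv SchwartzMap

theorem mpder_single {d : ℕ} {F : Type*} [NormedAddCommGroup F] [NormedSpace ℝ F]
    (i : Fin d) (m : ℕ) (f : E d → F) : mpder (Pi.single i m) f = (pder i)^[m] f := by
  have key : ∀ l : List (Fin d), l.Nodup →
      l.foldr (fun j g => (pder j)^[(Pi.single i m : Fin d → ℕ) j] g) f =
        if i ∈ l then (pder i)^[m] f else f := by
    intro l hl
    induction l with
    | nil => simp
    | cons a l ih =>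
      rw [List.nodup_cons] at hl
      rw [List.foldr_cons, ih hl.2]
      by_cases h : a = i
      · subst h
        simp [hl.1]
      · simp [h, Ne.symm h]
  simpa [mpder] using key _ (List.nodup_finRange d)

theorem coe_iterate_lineDerivOp_single {d : ℕ} (i : Fin d) (m : ℕ) (f : 𝓢(E d, ℂ)) :
    ⇑((∂_{(EuclideanSpace.single i 1 : E d)})^[m] f) = (pder i)^[m] ⇑f := by
  induction m with
  | zero => rfl
  | succ m ih =>
    rw [Function.iterate_succ_apply', Function.iterate_succ_apply', ← ih]
    rfl

theorem norm_fourier_iterate_lineDerivOp_single {d : ℕ} (i : Fin d) (m : ℕ) (f : 𝓢(E d, ℂ))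
    (ξ : E d) :
    ‖𝓕 ((∂_{(EuclideanSpace.single i 1 : E d)})^[m] f) ξ‖ =
      (2 * π * |ξ i|) ^ m * ‖𝓕 f ξ‖ := by
  induction m with
  | zero => simp
  | succ m ih =>
    have hg : (fun x : E d => inner ℝ x (EuclideanSpace.single i 1)).HasTemperateGrowth := by
      fun_prop
    rw [Function.iterate_succ_apply', fourier_lineDerivOp_eq, _root_.smul_apply,
      smulLeftCLM_apply_apply hg, norm_smul, norm_smul, ih, pow_succ]
    simp [EuclideanSpace.inner_single_right, abs_of_pos Real.pi_pos]
    ring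

theorem SchwartzMap.eLpNorm_fourier_two_eq {d : ℕ} (f : 𝓢(E d, ℂ)) :
    eLpNorm (𝓕 f : 𝓢(E d, ℂ)) 2 volume = eLpNorm f 2 volume := by
  have h := norm_fourier_toL2_eq f
  rwa [norm_toLp, norm_toLp, ENNReal.toReal_eq_toReal_iff'
    ((𝓕 f).memLp 2 volume).eLpNorm_ne_top (f.memLp 2 volume).eLpNorm_ne_top] at h

theorem EuclideanSpace.norm_pow_le_sum {d : ℕ} (hd : 1 ≤ d) (m : ℕ) (ξ : E d) :
    ‖ξ‖ ^ m ≤ ∑ i, (d * |ξ i|) ^ m := by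
  have : Nonempty (Fin d) := ⟨⟨0, hd⟩⟩
  obtain ⟨i, hi⟩ := Finite.exists_max fun i => |ξ i|
  have h : ‖ξ‖ ≤ d * |ξ i| := by
    calc ‖ξ‖ ≤ ∑ j, |ξ j| := by
          rw [EuclideanSpace.norm_eq]
          refine Real.sqrt_le_left (by positivity) |>.mpr ?_
          simpa using Finset.sum_sq_le_sq_sum_of_nonneg (s := Finset.univ)
            (f := fun j => |ξ j|) fun j _ => abs_nonneg _
      _ ≤ ∑ _j : Fin d, |ξ i| := Finset.sum_le_sum fun j _ => hi j
      _ = d * |ξ i| := by simp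
  calc ‖ξ‖ ^ m ≤ (d * |ξ i|) ^ m := by gcongr
    _ ≤ _ := Finset.single_le_sum (f := fun i => ((d : ℝ) * |ξ i|) ^ m)
      (fun j _ => by positivity) (Finset.mem_univ i)

theorem eLpNorm_two_le_of_support_subset {d : ℕ} {B : Set (E d)} (hB : IsCompact B)
    {f : E d → ℂ} (hf : Function.support f ⊆ B) {M : ℝ} (hM : ∀ x, ‖f x‖ ≤ M) :
    eLpNorm f 2 volume ≤ ENNReal.ofReal (√(volume B).toReal * M) := by
  rw [← eLpNorm_restrict_eq_of_support_subset hf]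
  refine (eLpNorm_le_of_ae_bound (.of_forall hM)).trans_eq ?_
  rw [ENNReal.ofReal_mul (by positivity), Measure.restrict_apply_univ, Real.sqrt_eq_rpow,
    ← ENNReal.ofReal_rpow_of_nonneg (by positivity) (by positivity),
    ENNReal.ofReal_toReal hB.measure_lt_top.ne]
  norm_num

/-- Moment bound for the Fourier transform of a compactly
supported Gevrey function: for even `m`,
`‖|ξ|^m û‖_{L²} ≤ |B|^{1/2} C₀ C(d,m) R^m (m!)^s`. -/
theorem stmt_18 :
    ∃ C : ℕ → ℕ → ℝ,
      ∀ (d : ℕ), 1 ≤ d →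
      ∀ (s R : ℝ), 1 ≤ s → 0 < R →
      ∀ (B : Set (E d)), IsCompact B →
      ∀ (u : E d → ℂ) (C₀ : ℝ),
        ContDiff ℝ (⊤ : ℕ∞) u →
        Function.support u ⊆ B →
        (∀ (α : Fin d → ℕ) (x : E d),
          ‖mpder α u x‖ ≤ C₀ * R ^ (∑ i, α i) * (Nat.factorial (∑ i, α i) : ℝ) ^ s) →
      ∀ (m : ℕ), Even m →
        eLpNorm (fun ξ : E d => ‖ξ‖ ^ m • 𝓕 u ξ) 2 volume
          ≤ ENNReal.ofReal
              (Real.sqrt ((volume B).toReal) * C₀ * C d m * R ^ m *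
                (Nat.factorial m : ℝ) ^ s) := by
  refine ⟨fun d m => d * (d / (2 * π)) ^ m, ?_⟩
  intro d hd s R _ _ B hB u C₀ hu hsupp hbound m _
  have hts : tsupport u ⊆ B := closure_minimal hsupp hB.isClosed
  have hcs : HasCompactSupport u := hB.of_isClosed_subset (isClosed_tsupport u) hts
  let f : 𝓢(E d, ℂ) := hcs.toSchwartzMap hu
  let D : Fin d → 𝓢(E d, ℂ) := fun i => (∂_{(EuclideanSpace.single i 1 : E d)})^[m] f
  set c : ℝ := (d / (2 * π)) ^ m with hc
  have hc0 : 0 ≤ c := by positivity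
  have hD : ∀ i, eLpNorm (D i) 2 volume ≤
      ENNReal.ofReal (√(volume B).toReal * (C₀ * R ^ m * (m.factorial : ℝ) ^ s)) := by
    intro i
    refine eLpNorm_two_le_of_support_subset hB ?_ fun x => ?_
    · refine (subset_tsupport _).trans (Set.Subset.trans ?_ hts)
      have := tsupport_iteratedLineDerivOp_subset
        (fun _ : Fin m => (EuclideanSpace.single i 1 : E d)) f
      rwa [iteratedLineDerivOp_const_eq_iter_lineDerivOp] at this
    · have h := hbound (Pi.single i m) x
      rw [mpder_single, Finset.sum_pi_single', if_pos (Finset.mem_univ i)] at h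
      rw [coe_iterate_lineDerivOp_single]
      exact h
  have hpt : ∀ ξ : E d, ‖‖ξ‖ ^ m • 𝓕 u ξ‖ ≤ ‖∑ i, c * ‖𝓕 (D i) ξ‖‖ := by
    intro ξ
    have hfu : 𝓕 u ξ = 𝓕 f ξ := by
      rw [fourier_coe]; rfl
    rw [norm_smul, norm_pow, norm_norm, hfu, Real.norm_of_nonneg (by positivity)]
    refine (mul_le_mul_of_nonneg_right (EuclideanSpace.norm_pow_le_sum hd m ξ)
      (norm_nonneg _)).trans_eq ?_
    rw [Finset.sum_mul]
    refine Finset.sum_congr rfl fun i _ => ?_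
    rw [norm_fourier_iterate_lineDerivOp_single, ← mul_assoc, hc, ← mul_pow]
    congr 2
    field_simp
  calc eLpNorm (fun ξ : E d => ‖ξ‖ ^ m • 𝓕 u ξ) 2 volume
      ≤ eLpNorm (∑ i, fun ξ => c * ‖𝓕 (D i) ξ‖) 2 volume :=
        eLpNorm_mono fun ξ => by simpa only [Finset.sum_apply] using hpt ξ
    _ ≤ ∑ i, eLpNorm (fun ξ => c * ‖𝓕 (D i) ξ‖) 2 volume :=
        eLpNorm_sum_le (fun i _ => ((𝓕 (D i)).continuous.norm.const_mul c).aestronglyMeasurable)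
          (by norm_num)
    _ = ∑ i, ENNReal.ofReal c * eLpNorm (D i) 2 volume := by
        refine Finset.sum_congr rfl fun i _ => ?_
        rw [← eLpNorm_fourier_two_eq, ← eLpNorm_norm (𝓕 (D i) : 𝓢(E d, ℂ)),
          ← Real.enorm_of_nonneg hc0]
        exact eLpNorm_const_smul c _ 2 volume
    _ ≤ ∑ _i : Fin d, ENNReal.ofReal c *
          ENNReal.ofReal (√(volume B).toReal * (C₀ * R ^ m * (m.factorial : ℝ) ^ s)) := by
        gcongr with i
        exact hD i
    _ = _ := by
        rw [← ENNReal.ofReal_mul hc0, Finset.sum_const, Finset.card_univ, Fintype.card_fin,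
          nsmul_eq_mul, ← ENNReal.ofReal_natCast, ← ENNReal.ofReal_mul (by positivity)]
        congr 1
        ring
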